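/- For the 10-to-1 magic state distillation protocol with the [[10,1,2]] code under the noise model above, conditioned on a trivial syndrome, the probability that the output state carries a logical Z error satisfies p_out = p² + 9p³ + O(p⁴). -/

import Mathlib

/-!
The `[[10,1,2]]` code obtained by morphing the 15-qubit Reed–Muller code,
with seven simplex qubits (noisy `|T⟩` states, indexed by nonzero `v ∈ F₂³`)
and three edge qubits (a noisy `|CCZ⟩` state).  Undetected Z-errors are those
commuting with all three X-stabilizer generators; such an error is a logical Z
iff it anticommutes with the logical X (supported on the seven simplex qubits),
i.e. iff the parity of the `|T⟩` errors is odd.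
-/

abbrev V3 := {v : Fin 3 → ZMod 2 // v ≠ 0}

noncomputable def pT (p : ℝ) (e : V3 → Bool) : ℝ :=
  ∏ v : V3, if e v then p else 1 - p

noncomputable def pCCZ (p : ℝ) (b : Fin 3 → ZMod 2) : ℝ :=
  if b = 0 then 1 - p else p / 7

def syndromeTrivial (e : V3 → Bool) (b : Fin 3 → ZMod 2) : Prop :=
  ∀ i : Fin 3, (∑ v : V3, if v.1 i = 1 ∧ e v then (1 : ZMod 2) else 0) = b i

instance (e : V3 → Bool) (b : Fin 3 → ZMod 2) : Decidable (syndromeTrivial e b) := by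
  unfold syndromeTrivial; infer_instance

/-- The undetected error acts as a nontrivial logical Z on the output: it
anticommutes with the logical X, i.e. the parity of the `|T⟩` errors is odd. -/
def logicalZErr (e : V3 → Bool) : Prop :=
  (∑ v : V3, if e v then (1 : ZMod 2) else 0) = 1

instance (e : V3 → Bool) : Decidable (logicalZErr e) := by
  unfold logicalZErr; infer_instance

/-- Probability of a trivial syndrome. -/
noncomputable def pSucc (p : ℝ) : ℝ :=
  ∑ e : V3 → Bool, ∑ b : Fin 3 → ZMod 2,
    if syndromeTrivial e b then pT p e * pCCZ p b else 0

/-- Probability of a trivial syndrome together with a logical Z error. -/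
noncomputable def pFail (p : ℝ) : ℝ :=
  ∑ e : V3 → Bool, ∑ b : Fin 3 → ZMod 2,
    if syndromeTrivial e b ∧ logicalZErr e then pT p e * pCCZ p b else 0

/-- The output error: probability of a logical Z error conditioned on a trivial
syndrome. -/
noncomputable def pOut (p : ℝ) : ℝ := pFail p / pSucc p

/-- Weight of a `|T⟩` error pattern. -/
def wtT (e : V3 → Bool) : ℕ := (Finset.univ.filter fun v => e v = true).card

/-- The syndrome contributed by the `|T⟩` errors. -/
def synT (e : V3 → Bool) : Fin 3 → ZMod 2 :=
  fun i => ∑ v : V3, if v.1 i = 1 ∧ e v then (1 : ZMod 2) else 0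

/-- Weight class and triviality of the contributed syndrome. -/
def clsT (e : V3 → Bool) : ℕ × Bool := (wtT e, decide (synT e = 0))

/-- Weight enumerator split by triviality of the contributed syndrome. -/
def tableT : ℕ × Bool → ℕ
  | (0, true) => 1
  | (1, false) => 7
  | (2, false) => 21
  | (3, true) => 7
  | (3, false) => 28
  | (4, true) => 7
  | (4, false) => 28
  | (5, false) => 21
  | (6, false) => 7
  | (7, true) => 1
  | _ => 0

lemma card_V3 : Fintype.card V3 = 7 := by decide +kernel

lemma count_T : ∀ c ∈ Finset.range 8 ×ˢ (Finset.univ : Finset Bool),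
    (Finset.univ.filter fun e : V3 → Bool => clsT e = c).card = tableT c := by
  decide +kernel

lemma pT_eq (p : ℝ) (e : V3 → Bool) : pT p e = p ^ wtT e * (1 - p) ^ (7 - wtT e) := by
  unfold pT wtT
  rw [Finset.prod_ite, Finset.prod_const, Finset.prod_const]
  have h := Finset.card_filter_add_card_filter_not (s := (Finset.univ : Finset V3))
    (fun v => e v = true)
  rw [Finset.card_univ, card_V3] at h
  congr 2
  omega

lemma clsT_mem (e : V3 → Bool) : clsT e ∈ Finset.range 8 ×ˢ (Finset.univ : Finset Bool) := by
  have h : wtT e ≤ 7 := by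
    rw [← card_V3]; exact Finset.card_le_univ _
  simp only [clsT, Finset.mem_product, Finset.mem_range, Finset.mem_univ, and_true]
  omega

lemma sum_cls (f : ℕ × Bool → ℝ) : ∑ e : V3 → Bool, f (clsT e) =
    ∑ c ∈ Finset.range 8 ×ˢ (Finset.univ : Finset Bool), (tableT c : ℝ) * f c := by
  rw [← Finset.sum_fiberwise_of_maps_to (fun e _ => clsT_mem e)]
  refine Finset.sum_congr rfl fun c hc => ?_
  rw [← count_T c hc, Finset.sum_congr rfl (g := fun _ => f c), Finset.sum_const, nsmul_eq_mul]
  intro e he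
  rw [(Finset.mem_filter.1 he).2]

lemma syn_iff (e : V3 → Bool) (b : Fin 3 → ZMod 2) : syndromeTrivial e b ↔ synT e = b :=
  funext_iff.symm

lemma logical_iff (e : V3 → Bool) : logicalZErr e ↔ wtT e % 2 = 1 := by
  unfold logicalZErr wtT
  rw [Finset.sum_boole, ← ZMod.natCast_mod]
  rcases Nat.mod_two_eq_zero_or_one (Finset.univ.filter fun v => e v = true).card with h | h <;>
    simp [h]

/-- Joint probability of one error class. -/
noncomputable def wgt (p : ℝ) (c : ℕ × Bool) : ℝ :=
  p ^ c.1 * (1 - p) ^ (7 - c.1) * (if c.2 = true then 1 - p else p / 7)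

lemma wgt_cls (p : ℝ) (e : V3 → Bool) : pT p e * pCCZ p (synT e) = wgt p (clsT e) := by
  rw [pT_eq]
  simp [wgt, clsT, pCCZ]

lemma pSucc_eq (p : ℝ) : pSucc p = (1 - p) ^ 8 + p ^ 2 * (1 - p) ^ 6
    + 3 * p ^ 3 * (1 - p) ^ 5 + 7 * p ^ 3 * (1 - p) ^ 5 + 4 * p ^ 4 * (1 - p) ^ 4
    + 7 * p ^ 4 * (1 - p) ^ 4 + 4 * p ^ 5 * (1 - p) ^ 3 + 3 * p ^ 6 * (1 - p) ^ 2
    + p ^ 7 * (1 - p) + p ^ 7 * (1 - p) := by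
  have h : pSucc p = ∑ e : V3 → Bool, wgt p (clsT e) := by
    unfold pSucc
    refine Finset.sum_congr rfl fun e _ => ?_
    simp only [syn_iff, Finset.sum_ite_eq, Finset.mem_univ, if_true, wgt_cls]
  rw [h, sum_cls, Finset.sum_product]
  simp [Finset.sum_range_succ, tableT, wgt]
  ring

lemma pFail_eq (p : ℝ) : pFail p = p ^ 2 * (1 - p) ^ 6 + 7 * p ^ 3 * (1 - p) ^ 5
    + 4 * p ^ 4 * (1 - p) ^ 4 + 3 * p ^ 6 * (1 - p) ^ 2 + p ^ 7 * (1 - p) := by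
  have h : pFail p = ∑ e : V3 → Bool,
      (fun c : ℕ × Bool => if c.1 % 2 = 1 then wgt p c else 0) (clsT e) := by
    unfold pFail
    refine Finset.sum_congr rfl fun e _ => ?_
    simp only [syn_iff, logical_iff, ite_and, Finset.sum_ite_eq, Finset.mem_univ, if_true, wgt_cls]
    rfl
  rw [h, sum_cls (fun c : ℕ × Bool => if c.1 % 2 = 1 then wgt p c else 0), Finset.sum_product]
  simp [Finset.sum_range_succ, tableT, wgt]
  ring

/-- For the 10-to-1 magic state distillation protocol with the
`[[10,1,2]]` code under the stated noise model, conditioned on a trivial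
syndrome, the output logical Z error probability satisfies
`p_out = p² + 9p³ + O(p⁴)`. -/
theorem ten_to_one_output_error :
    ∃ C : ℝ, 0 < C ∧ ∀ p : ℝ, 0 ≤ p → p ≤ 1 / 2 →
      |pOut p - (p ^ 2 + 9 * p ^ 3)| ≤ C * p ^ 4 := by
  refine ⟨271 * 256, by norm_num, fun p h0 h1 => ?_⟩
  have hq : (1 : ℝ) / 2 ≤ 1 - p := by linarith
  have hq0 : (0 : ℝ) ≤ 1 - p := by linarith
  have hS : (1 : ℝ) / 256 ≤ pSucc p := by
    have h8 : ((1 : ℝ) / 2) ^ 8 ≤ (1 - p) ^ 8 := by gcongr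
    have hr : 0 ≤ pSucc p - (1 - p) ^ 8 := by
      rw [pSucc_eq]
      generalize 1 - p = q at *
      ring_nf
      positivity
    norm_num at h8
    linarith
  have hS0 : 0 < pSucc p := by linarith
  have key : pFail p - (p ^ 2 + 9 * p ^ 3) * pSucc p = p ^ 4 * ((27) * p ^ 0 + (-175) * p ^ 1 + (394) * p ^ 2 + (-390) * p ^ 3 + (144) * p ^ 4) := by
    rw [pFail_eq, pSucc_eq]
    ring
  have hb : ∀ n : ℕ, 0 ≤ p ^ n ∧ p ^ n ≤ (1 / 2) ^ n := fun n =>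
    ⟨by positivity, by gcongr⟩
  have hR : |(27) * p ^ 0 + (-175) * p ^ 1 + (394) * p ^ 2 + (-390) * p ^ 3 + (144) * p ^ 4| ≤ 271 := by
    obtain ⟨b1, c1⟩ := hb 1
    obtain ⟨b2, c2⟩ := hb 2
    obtain ⟨b3, c3⟩ := hb 3
    obtain ⟨b4, c4⟩ := hb 4
    obtain ⟨b5, c5⟩ := hb 5
    obtain ⟨b6, c6⟩ := hb 6
    obtain ⟨b7, c7⟩ := hb 7
    rw [abs_le]
    constructor <;> linarith
  have hO : pOut p - (p ^ 2 + 9 * p ^ 3)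
      = (pFail p - (p ^ 2 + 9 * p ^ 3) * pSucc p) / pSucc p := by
    unfold pOut
    field_simp
  rw [hO, key, abs_div, abs_mul, abs_of_pos hS0, abs_of_nonneg (by positivity : 0 ≤ p ^ 4),
    div_le_iff₀ hS0]
  calc p ^ 4 * |(27) * p ^ 0 + (-175) * p ^ 1 + (394) * p ^ 2 + (-390) * p ^ 3 + (144) * p ^ 4| ≤ p ^ 4 * 271 := by gcongr
    _ = 271 * 256 * p ^ 4 * (1 / 256) := by ring
    _ ≤ 271 * 256 * p ^ 4 * pSucc p := by gcongr
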